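/- Fix an integer M ≥ 1 and let μ be the product probability measure on ℝ^{2M} whose 2M coordinates are i.i.d. real Gaussians with mean 0 and variance 1/2. Then for every τ > 0 and θ ≥ 0, ∫ (τ‖x‖ − θ)²·𝟙{τ‖x‖ ≥ θ} dμ(x) = (θ²·Γ̄(M, (θ/τ)²) − 2θτ·Γ̄(M + 1/2, (θ/τ)²) + τ²·Γ̄(M + 1, (θ/τ)²)) / Γ(M), where ‖·‖ is the Euclidean norm. -/

import Mathlib

open MeasureTheory ProbabilityTheory

/-- The upper incomplete gamma function `Γ̄(s, x) = ∫_x^∞ t^{s-1} e^{-t} dt`. -/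
noncomputable def uGamma (s x : ℝ) : ℝ := ∫ t in Set.Ioi x, t ^ (s - 1) * Real.exp (-t)

/-! The squared norm of a centred Gaussian vector in `ℝⁿ` with i.i.d. coordinates of variance `v` is
Gamma distributed with shape `n / 2` and rate `1 / (2v)`. Expanding the square `(τ√u - θ)²` on the
half-line `u > (θ/τ)²` where the denoiser does not vanish leaves the truncated moments of order
`0`, `1/2` and `1` of this Gamma law, and each of them is an upper incomplete gamma value. -/

section SquaredNorm

open Module Real

variable {F : Type*} [NormedAddCommGroup F] [NormedSpace ℝ F]
  {E : Type*} [NormedAddCommGroup E] [InnerProductSpace ℝ E] [FiniteDimensional ℝ E]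
  [Nontrivial E] [MeasurableSpace E] [BorelSpace E]

variable (E) in
theorem finrank_mul_volume_real_ball_one :
    finrank ℝ E * volume.real (Metric.ball (0 : E) 1) =
      2 * π ^ (finrank ℝ E / 2 : ℝ) / Gamma (finrank ℝ E / 2) := by
  have hdim_pos : 0 < finrank ℝ E := finrank_pos
  have hhalf_pos : (0 : ℝ) < finrank ℝ E / 2 := by positivity
  have hΓ : Gamma (finrank ℝ E / 2) ≠ 0 := (Gamma_pos_of_pos hhalf_pos).ne'
  rw [measureReal_def, InnerProductSpace.volume_ball, ENNReal.ofReal_one, one_pow, one_mul,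
    ENNReal.toReal_ofReal (by positivity), Gamma_add_one hhalf_pos.ne',
    rpow_div_two_eq_sqrt _ pi_nonneg, rpow_natCast]
  field_simp

theorem integral_Ioi_rpow_smul_eq_two_smul_comp_sq {n : ℕ} (hn : 0 < n) (f : ℝ → F) :
    ∫ t in Set.Ioi (0 : ℝ), t ^ (n / 2 - 1 : ℝ) • f t =
      (2 : ℝ) • ∫ y in Set.Ioi (0 : ℝ), y ^ (n - 1) • f (y ^ 2) := by
  rw [← integral_comp_rpow_Ioi_of_pos zero_lt_two, ← integral_smul]
  refine setIntegral_congr_fun measurableSet_Ioi fun y (hy : 0 < y) ↦ ?_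
  have hpow : y ^ (n - 1) = y * (y ^ 2) ^ (n / 2 - 1 : ℝ) := by
    have hexponent : ((n - 1 : ℕ) : ℝ) = 1 + (2 : ℕ) * (n / 2 - 1 : ℝ) := by
      rw [Nat.cast_pred hn]
      push_cast
      ring
    rw [← rpow_natCast, hexponent, rpow_add hy, rpow_one, rpow_natCast_mul hy.le]
  simp only [rpow_two, smul_smul, hpow]
  norm_num [mul_assoc]

theorem integral_comp_norm_sq (f : ℝ → F) :
    ∫ x : E, f (‖x‖ ^ 2) =
      (π ^ (finrank ℝ E / 2 : ℝ) / Gamma (finrank ℝ E / 2)) •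
        ∫ t in Set.Ioi (0 : ℝ), t ^ (finrank ℝ E / 2 - 1 : ℝ) • f t := by
  rw [integral_fun_norm_addHaar volume fun y ↦ f (y ^ 2), ← Nat.cast_smul_eq_nsmul ℝ,
    smul_smul, finrank_mul_volume_real_ball_one, mul_comm 2, mul_div_right_comm, mul_smul,
    integral_Ioi_rpow_smul_eq_two_smul_comp_sq finrank_pos]

theorem integral_comp_sum_sq {ι : Type*} [Fintype ι] [Nonempty ι] (f : ℝ → F) :
    ∫ x : ι → ℝ, f (∑ i, x i ^ 2) =
      (π ^ (Fintype.card ι / 2 : ℝ) / Gamma (Fintype.card ι / 2)) •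
        ∫ t in Set.Ioi (0 : ℝ), t ^ (Fintype.card ι / 2 - 1 : ℝ) • f t := by
  have h := integral_comp_norm_sq (E := EuclideanSpace ℝ ι) f
  rw [finrank_euclideanSpace] at h
  rw [← h, ← (PiLp.volume_preserving_toLp ι).integral_comp
    (MeasurableEquiv.toLp 2 (ι → ℝ)).measurableEmbedding]
  simp only [EuclideanSpace.real_norm_sq_eq]

end SquaredNorm

section GaussianDensity

variable {ι : Type*} [Fintype ι]

theorem pi_withDensity_ofReal {α : ι → Type*} [∀ i, MeasurableSpace (α i)]
    {μ : ∀ i, Measure (α i)} [∀ i, SigmaFinite (μ i)] {f : ∀ i, α i → ℝ}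
    (hf : ∀ i, Integrable (f i) (μ i)) (hf_nonneg : ∀ i x, 0 ≤ f i x) :
    Measure.pi (fun i ↦ (μ i).withDensity fun x ↦ ENNReal.ofReal (f i x)) =
      (Measure.pi μ).withDensity fun x ↦ ENNReal.ofReal (∏ i, f i (x i)) := by
  have (i : ι) : IsFiniteMeasure ((μ i).withDensity fun x ↦ ENNReal.ofReal (f i x)) :=
    isFiniteMeasure_withDensity_ofReal (hf i).2
  refine Measure.pi_eq fun s hs ↦ ?_
  rw [withDensity_apply _ (MeasurableSet.univ_pi hs),
    ← ofReal_integral_eq_lintegral_ofReal (Integrable.fintype_prod_dep hf).integrableOn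
      (ae_of_all _ fun x ↦ Finset.prod_nonneg fun i _ ↦ hf_nonneg i (x i)),
    Measure.restrict_pi_pi, integral_fintype_prod_eq_prod f,
    ENNReal.ofReal_prod_of_nonneg fun i _ ↦ integral_nonneg (hf_nonneg i)]
  refine Finset.prod_congr rfl fun i _ ↦ ?_
  rw [withDensity_apply _ (hs i), ← ofReal_integral_eq_lintegral_ofReal (hf i).integrableOn
    (ae_of_all _ (hf_nonneg i))]

theorem pi_gaussianReal_eq_withDensity (m : ι → ℝ) {v : ι → NNReal} (hv : ∀ i, v i ≠ 0) :
    Measure.pi (fun i ↦ gaussianReal (m i) (v i)) =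
      volume.withDensity fun x ↦ ENNReal.ofReal (∏ i, gaussianPDFReal (m i) (v i) (x i)) := by
  simp only [gaussianReal_of_var_ne_zero _ (hv _), volume_pi]
  exact pi_withDensity_ofReal (fun i ↦ integrable_gaussianPDFReal (m i) (v i))
    fun i ↦ gaussianPDFReal_nonneg (m i) (v i)

theorem prod_gaussianPDFReal_zero (v : NNReal) (x : ι → ℝ) :
    ∏ i, gaussianPDFReal 0 v (x i) =
      (√(2 * Real.pi * v))⁻¹ ^ Fintype.card ι * Real.exp (-(1 / (2 * v) * ∑ i, x i ^ 2)) := by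
  simp only [gaussianPDFReal, Finset.prod_mul_distrib, Finset.prod_const, Finset.card_univ,
    ← Real.exp_sum, Finset.mul_sum, ← Finset.sum_neg_distrib, sub_zero]
  congr! 3
  ring

end GaussianDensity

section GammaLaw

open Real

variable {a r : ℝ}

theorem uGamma_mul (hr : 0 < r) {c : ℝ} (hc : 0 ≤ c) (s : ℝ) :
    uGamma s (r * c) = r ^ s * ∫ u in Set.Ioi c, u ^ (s - 1) * exp (-(r * u)) := by
  have hsubst : uGamma s (r * c) =
      r * ∫ u in Set.Ioi c, (r * u) ^ (s - 1) * exp (-(r * u)) := by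
    rw [integral_comp_mul_left_Ioi (fun t ↦ t ^ (s - 1) * exp (-t)) c hr, smul_eq_mul,
      mul_inv_cancel_left₀ hr.ne', uGamma]
  rw [hsubst, ← integral_const_mul, ← integral_const_mul]
  refine setIntegral_congr_fun measurableSet_Ioi fun u hu ↦ ?_
  have hu_pos : 0 < u := hc.trans_lt hu
  simp only [mul_rpow hr.le hu_pos.le, ← mul_assoc, rpow_sub_one hr.ne', mul_div_cancel₀ _ hr.ne']

theorem measurable_gammaPDF (a r : ℝ) : Measurable (gammaPDF a r) :=
  (measurable_gammaPDFReal a r).ennreal_ofReal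

theorem integral_gammaMeasure {F : Type*} [NormedAddCommGroup F] [NormedSpace ℝ F]
    (ha : 0 < a) (hr : 0 < r) (f : ℝ → F) :
    ∫ u, f u ∂gammaMeasure a r =
      ∫ u in Set.Ioi 0, (r ^ a / Gamma a * u ^ (a - 1) * exp (-(r * u))) • f u := by
  rw [gammaMeasure, integral_withDensity_eq_integral_toReal_smul (measurable_gammaPDF a r)
      (ae_of_all _ fun _ ↦ ENNReal.ofReal_lt_top),
    ← integral_Ici_eq_integral_Ioi, ← integral_indicator measurableSet_Ici]
  congr with u
  rw [gammaPDF, ENNReal.toReal_ofReal (gammaPDFReal_nonneg ha hr u)]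
  by_cases hu : 0 ≤ u <;> simp [gammaPDFReal, hu]

theorem integral_comp_sum_sq_pi_gaussianReal {F : Type*} [NormedAddCommGroup F] [NormedSpace ℝ F]
    {ι : Type*} [Fintype ι] [Nonempty ι] {v : NNReal} (hv : v ≠ 0) (f : ℝ → F) :
    ∫ x, f (∑ i, x i ^ 2) ∂(Measure.pi fun _ : ι ↦ gaussianReal 0 v) =
      ∫ u, f u ∂gammaMeasure (Fintype.card ι / 2) (1 / (2 * v)) := by
  have hconst (n : ℕ) :
      π ^ (n / 2 : ℝ) * (√(2 * π * v))⁻¹ ^ n = (1 / (2 * v : ℝ)) ^ (n / 2 : ℝ) := by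
    rw [rpow_div_two_eq_sqrt _ pi_nonneg, rpow_div_two_eq_sqrt _ (by positivity), rpow_natCast,
      rpow_natCast, ← mul_pow, ← sqrt_inv, ← sqrt_mul pi_nonneg]
    congr 2
    field_simp
  have hpdf_nonneg (x : ι → ℝ) : 0 ≤ ∏ i, gaussianPDFReal 0 v (x i) :=
    Finset.prod_nonneg fun i _ ↦ gaussianPDFReal_nonneg 0 v (x i)
  rw [pi_gaussianReal_eq_withDensity _ fun _ ↦ hv,
    integral_withDensity_eq_integral_toReal_smul (by fun_prop)
      (ae_of_all _ fun _ ↦ ENNReal.ofReal_lt_top)]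
  simp_rw [ENNReal.toReal_ofReal (hpdf_nonneg _), prod_gaussianPDFReal_zero]
  rw [integral_comp_sum_sq fun t ↦
      ((√(2 * π * v))⁻¹ ^ Fintype.card ι * exp (-(1 / (2 * v) * t))) • f t,
    integral_gammaMeasure (by positivity) (by positivity), ← integral_smul]
  simp only [smul_smul, ← hconst]
  congr! 3
  ring

theorem gammaPDF_toReal_mul_rpow (ha : 0 < a) (hr : 0 < r) {u : ℝ} (hu : 0 < u) (p : ℝ) :
    (gammaPDF a r u).toReal * u ^ p =
      r ^ a / Gamma a * (u ^ (a + p - 1) * exp (-(r * u))) := by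
  rw [gammaPDF, ENNReal.toReal_ofReal (gammaPDFReal_nonneg ha hr u), gammaPDFReal, if_pos hu.le,
    add_sub_right_comm, rpow_add hu]
  ring

theorem integrableOn_Ioi_rpow_gammaMeasure (ha : 0 < a) (hr : 0 < r) {p c : ℝ} (hap : 0 < a + p)
    (hc : 0 ≤ c) : IntegrableOn (fun u ↦ u ^ p) (Set.Ioi c) (gammaMeasure a r) := by
  have hexp : IntegrableOn (fun u ↦ u ^ (a + p - 1) * exp (-(r * u))) (Set.Ioi c) := by
    have := integrableOn_rpow_mul_exp_neg_mul_rpow (s := a + p - 1) (by linarith) zero_lt_one hr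
    simpa using this.mono_set (Set.Ioi_subset_Ioi hc)
  rw [IntegrableOn, gammaMeasure, restrict_withDensity measurableSet_Ioi,
    integrable_withDensity_iff_integrable_smul' (measurable_gammaPDF a r)
      (ae_of_all _ fun _ ↦ ENNReal.ofReal_lt_top)]
  exact IntegrableOn.congr_fun (hexp.const_mul (r ^ a / Gamma a))
    (fun u hu ↦ (gammaPDF_toReal_mul_rpow ha hr (hc.trans_lt hu) p).symm) measurableSet_Ioi

theorem setIntegral_Ioi_rpow_gammaMeasure (ha : 0 < a) (hr : 0 < r) {c : ℝ} (hc : 0 ≤ c) (p : ℝ) :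
    ∫ u in Set.Ioi c, u ^ p ∂gammaMeasure a r = uGamma (a + p) (r * c) / (r ^ p * Gamma a) := by
  have hdensity : Set.EqOn (fun u ↦ (gammaPDF a r u).toReal • u ^ p)
      (fun u ↦ r ^ a / Gamma a * (u ^ (a + p - 1) * exp (-(r * u)))) (Set.Ioi c) :=
    fun u hu ↦ gammaPDF_toReal_mul_rpow ha hr (hc.trans_lt hu) p
  rw [gammaMeasure, restrict_withDensity measurableSet_Ioi,
    integral_withDensity_eq_integral_toReal_smul (measurable_gammaPDF a r)
      (ae_of_all _ fun _ ↦ ENNReal.ofReal_lt_top),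
    setIntegral_congr_fun measurableSet_Ioi hdensity, integral_const_mul,
    uGamma_mul hr hc, rpow_add hr]
  have := (rpow_pos_of_pos hr p).ne'
  field_simp

end GammaLaw

section SoftThreshold

variable {τ θ : ℝ}

theorem ite_softThreshold_sq_eq_indicator (hτ : 0 < τ) (hθ : 0 ≤ θ) (u : ℝ) :
    (if θ ≤ τ * √u then (τ * √u - θ) ^ 2 else 0) =
      (Set.Ioi ((θ / τ) ^ 2)).indicator (fun u ↦ (τ * √u - θ) ^ 2) u := by
  have hmem : u ∈ Set.Ioi ((θ / τ) ^ 2) ↔ θ < τ * √u := by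
    rw [Set.mem_Ioi, ← Real.lt_sqrt (by positivity), div_lt_iff₀' hτ]
  rcases lt_trichotomy θ (τ * √u) with h | h | h
  · simp [hmem.2 h, h.le]
  · simp [Set.indicator_of_notMem (hmem.not.2 h.not_lt), ← h]
  · simp [hmem, h.not_ge, h.not_gt]

theorem integral_softThreshold_sq_gammaMeasure {a r : ℝ} (ha : 0 < a) (hr : 0 < r)
    (hτ : 0 < τ) (hθ : 0 ≤ θ) :
    ∫ u, (if θ ≤ τ * √u then (τ * √u - θ) ^ 2 else 0) ∂gammaMeasure a r =
      (θ ^ 2 * uGamma a (r * (θ / τ) ^ 2)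
        - 2 * θ * τ / √r * uGamma (a + 1 / 2) (r * (θ / τ) ^ 2)
        + τ ^ 2 / r * uGamma (a + 1) (r * (θ / τ) ^ 2)) / Real.Gamma a := by
  set c := (θ / τ) ^ 2
  have hc : 0 ≤ c := by positivity
  have term_integrable (k : ℝ) {p : ℝ} (hp : 0 ≤ p) :
      IntegrableOn (fun u ↦ k * u ^ p) (Set.Ioi c) (gammaMeasure a r) :=
    (integrableOn_Ioi_rpow_gammaMeasure ha hr (by positivity) hc).const_mul k
  have const_integrable := term_integrable (θ ^ 2) le_rfl
  have sqrt_integrable := term_integrable (2 * θ * τ) one_half_pos.le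
  have linear_integrable := term_integrable (τ ^ 2) zero_le_one
  have hexpand : Set.EqOn (fun u ↦ (τ * √u - θ) ^ 2)
      (fun u ↦ θ ^ 2 * u ^ (0 : ℝ) - 2 * θ * τ * u ^ (1 / 2 : ℝ) + τ ^ 2 * u ^ (1 : ℝ))
      (Set.Ioi c) := by
    intro u hu
    simp only [Real.rpow_zero, Real.rpow_one, ← Real.sqrt_eq_rpow, mul_one]
    linear_combination τ ^ 2 * Real.sq_sqrt (hc.trans hu.le)
  simp only [ite_softThreshold_sq_eq_indicator hτ hθ]
  rw [integral_indicator measurableSet_Ioi, setIntegral_congr_fun measurableSet_Ioi hexpand,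
    integral_add (by exact const_integrable.sub sqrt_integrable) linear_integrable,
    integral_sub const_integrable sqrt_integrable]
  simp_rw [integral_const_mul, setIntegral_Ioi_rpow_gammaMeasure ha hr hc, add_zero,
    Real.rpow_zero, Real.rpow_one, ← Real.sqrt_eq_rpow]
  field_simp

end SoftThreshold

theorem noise_mse_eq_general {ι : Type*} [Fintype ι] [Nonempty ι] {v : NNReal} (hv : v ≠ 0)
    {τ θ : ℝ} (hτ : 0 < τ) (hθ : 0 ≤ θ) :
    ∫ x, (if θ ≤ τ * √(∑ i, x i ^ 2) then (τ * √(∑ i, x i ^ 2) - θ) ^ 2 else 0)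
        ∂(Measure.pi fun _ : ι ↦ gaussianReal 0 v) =
      (θ ^ 2 * uGamma (Fintype.card ι / 2) ((θ / τ) ^ 2 / (2 * v))
        - 2 * θ * (τ * √(2 * v)) * uGamma (Fintype.card ι / 2 + 1 / 2) ((θ / τ) ^ 2 / (2 * v))
        + τ ^ 2 * (2 * v) * uGamma (Fintype.card ι / 2 + 1) ((θ / τ) ^ 2 / (2 * v)))
          / Real.Gamma (Fintype.card ι / 2) := by
  rw [integral_comp_sum_sq_pi_gaussianReal hv
      fun u ↦ if θ ≤ τ * √u then (τ * √u - θ) ^ 2 else 0,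
    integral_softThreshold_sq_gammaMeasure (by positivity) (by positivity) hτ hθ]
  simp only [one_div_mul_eq_div, Real.sqrt_div zero_le_one, Real.sqrt_one, div_div_eq_mul_div,
    div_one, mul_assoc]

/-- The MSE of the block soft-thresholding denoiser with threshold `θ` on pure complex
Gaussian noise of per-complex-component variance `τ²`, modeled on `ℝ^{2M}` with i.i.d.
`N(0, 1/2)` coordinates:
`∫ (τ‖x‖ − θ)²·𝟙{τ‖x‖ ≥ θ} dμ = (θ²Γ̄(M,(θ/τ)²) − 2θτΓ̄(M+1/2,(θ/τ)²) + τ²Γ̄(M+1,(θ/τ)²))/Γ(M)`. -/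
theorem noise_mse_eq
    (M : ℕ) (hM : 1 ≤ M)
    (μ : Measure (Fin (2 * M) → ℝ))
    (hμ : μ = Measure.pi fun _ => gaussianReal 0 (1 / 2)) :
    ∀ (τ θ : ℝ), 0 < τ → 0 ≤ θ →
      (∫ x, (if θ ≤ τ * Real.sqrt (∑ i, x i ^ 2) then
          (τ * Real.sqrt (∑ i, x i ^ 2) - θ) ^ 2 else 0) ∂μ) =
        (θ ^ 2 * uGamma M ((θ / τ) ^ 2)
          - 2 * θ * τ * uGamma (M + 1 / 2) ((θ / τ) ^ 2)
          + τ ^ 2 * uGamma (M + 1) ((θ / τ) ^ 2)) / Real.Gamma M := by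
  intro τ θ hτ hθ
  have : Nonempty (Fin (2 * M)) := ⟨⟨0, by lia⟩⟩
  simpa [hμ] using noise_mse_eq_general (ι := Fin (2 * M)) (v := 1 / 2) (by simp) hτ hθ
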